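/- Efficient shortening of very long blue cycles: let k ≥ 3, k ≤ h ≤ 2n, and let H be a blue cycle of length n + h. Set r = 0 if h is even and r = 1 if h is odd. Then r̃_H(C_k, {C_{n+r}, C_{n+r+1}, C_{n+r+2}}) ≤ k + 1. -/

import Mathlib

open SimpleGraph

/-- A board state: the set of red edges and the set of blue edges. -/
abbrev Board : Type := Set (Sym2 ℕ) × Set (Sym2 ℕ)

/-- The set of already colored edges of a board. -/
def Board.colored (B : Board) : Set (Sym2 ℕ) := B.1 ∪ B.2

/-- A Builder strategy selects an edge given the current board. -/
abbrev BuilderStrat : Type := Board → Sym2 ℕ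

/-- A Painter strategy colors the selected edge (true = red, false = blue). -/
abbrev PainterStrat : Type := Board → Sym2 ℕ → Bool

/-- The board after `t` rounds of play from `init`. -/
def playGame (b : BuilderStrat) (p : PainterStrat) (init : Board) : ℕ → Board
  | 0 => init
  | t + 1 =>
      let B := playGame b p init t
      let e := b B
      if p B e then (insert e B.1, B.2) else (B.1, insert e B.2)

/-- Builder's strategy is valid from `init`: along any play it always selects a
previously unselected non-loop edge. -/
def ValidFrom (b : BuilderStrat) (init : Board) : Prop :=
  ∀ p : PainterStrat, ∀ t : ℕ,
    ¬ (b (playGame b p init t)).IsDiag ∧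
      b (playGame b p init t) ∉ (playGame b p init t).colored

/-- Builder can force the winning condition `W` within `t` rounds, starting from `init`. -/
def BuilderWinsIn (init : Board) (W : Board → Prop) (t : ℕ) : Prop :=
  ∃ b : BuilderStrat, ValidFrom b init ∧
    ∀ p : PainterStrat, ∃ s, s ≤ t ∧ W (playGame b p init s)

/-- `G` contains a copy of `H`. -/
def HasCopy {α β : Type} (H : SimpleGraph α) (G : SimpleGraph β) : Prop :=
  ∃ f : α ↪ β, ∀ x y, H.Adj x y → G.Adj (f x) (f y)

/-- The red part of the board contains a copy of `H`. -/
def RedCopy {α : Type} (H : SimpleGraph α) (B : Board) : Prop :=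
  HasCopy H (fromEdgeSet B.1)

/-- The blue part of the board contains a copy of `H`. -/
def BlueCopy {α : Type} (H : SimpleGraph α) (B : Board) : Prop :=
  HasCopy H (fromEdgeSet B.2)

/-- The empty board. -/
def emptyBoard : Board := (∅, ∅)

/-- Winning condition: a red `C_k` or a blue `C_n`. -/
def WinCC (k n : ℕ) (B : Board) : Prop :=
  RedCopy (cycleGraph k) B ∨ BlueCopy (cycleGraph n) B

/-- Winning condition: a red `C_k` or a blue path on `n` vertices. -/
def WinCP (k n : ℕ) (B : Board) : Prop :=
  RedCopy (cycleGraph k) B ∨ BlueCopy (pathGraph n) B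

/-- A board consisting of a single blue cycle on the vertices `0, …, m-1`. -/
def blueCycleBoard (m : ℕ) : Board :=
  (∅, {e | ∃ i : ℕ, i < m ∧ e = s(i, (i + 1) % m)})

/-- A board consisting of a single blue path on the vertices `0, …, m-1`. -/
def bluePathBoard (m : ℕ) : Board :=
  (∅, {e | ∃ i : ℕ, i + 1 < m ∧ e = s(i, i + 1)})

/-- `ForcedWin W t B`: from the board `B`, Builder can force `W` within `t` rounds, each round
selecting an uncolored non-loop edge. -/
inductive ForcedWin (W : Board → Prop) : ℕ → Board → Prop
  | done {t : ℕ} {B : Board} : W B → ForcedWin W t B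
  | step {t : ℕ} {B : Board} (e : Sym2 ℕ) : ¬ e.IsDiag → e ∉ B.colored →
      ForcedWin W t (insert e B.1, B.2) → ForcedWin W t (B.1, insert e B.2) →
      ForcedWin W (t + 1) B

theorem ForcedWin.mono {W : Board → Prop} {s t : ℕ} {B : Board} (h : ForcedWin W s B)
    (hst : s ≤ t) : ForcedWin W t B := by
  induction h generalizing t with
  | done h => exact .done h
  | step e hd hc _ _ ih₁ ih₂ =>
    obtain ⟨t, rfl⟩ : ∃ u, t = u + 1 := ⟨t - 1, by omega⟩
    exact .step e hd hc (ih₁ (by omega)) (ih₂ (by omega))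

/-- Builder may also select an already colored edge, since this does not change the board. -/
theorem ForcedWin.branch {W : Board → Prop} {t : ℕ} {B : Board} (e : Sym2 ℕ) (hd : ¬ e.IsDiag)
    (h₁ : ForcedWin W t (insert e B.1, B.2)) (h₂ : ForcedWin W t (B.1, insert e B.2)) :
    ForcedWin W (t + 1) B := by
  by_cases hr : e ∈ B.1
  · rw [Set.insert_eq_of_mem hr] at h₁
    exact h₁.mono (Nat.le_succ t)
  by_cases hb : e ∈ B.2
  · rw [Set.insert_eq_of_mem hb] at h₂
    exact h₂.mono (Nat.le_succ t)
  exact .step e hd (by simp [Board.colored, hr, hb]) h₁ h₂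

theorem exists_uncolored_edge {B : Board} (hB : B.colored.Finite) :
    ∃ e : Sym2 ℕ, ¬ e.IsDiag ∧ e ∉ B.colored := by
  have hinj : Function.Injective (fun i : ℕ => s(0, i + 1)) := by
    intro i j hij
    simpa using hij
  obtain ⟨e, ⟨i, rfl⟩, he⟩ := (Set.infinite_range_of_injective hinj).exists_notMem_finite hB
  exact ⟨_, by simp, he⟩

/-- On a finite board, forcing moves can be combined into a strategy. -/
theorem ForcedWin.builderWinsIn {W : Board → Prop} {t : ℕ} {B : Board}
    (h : ForcedWin W t B) (hB : B.colored.Finite) : BuilderWinsIn B W t := by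
  have key : ∀ B : Board, ∃ e : Sym2 ℕ, B.colored.Finite → (¬ e.IsDiag ∧ e ∉ B.colored) ∧
      ∀ t, ForcedWin W t B → ¬ W B → ∃ u, t = u + 1 ∧
        ForcedWin W u (insert e B.1, B.2) ∧ ForcedWin W u (B.1, insert e B.2) := by
    classical
    intro B
    by_cases hf : B.colored.Finite
    swap
    · exact ⟨s(0, 0), fun h => absurd h hf⟩
    by_cases hw : ¬ W B ∧ ∃ t, ForcedWin W t B
    · obtain ⟨hW, hex⟩ := hw
      have hmin := Nat.find_spec hex
      have hle : ∀ t, ForcedWin W t B → Nat.find hex ≤ t := fun t ht => Nat.find_min' hex ht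
      generalize Nat.find hex = t₀ at hmin hle
      cases hmin with
      | done h => exact absurd h hW
      | @step u _ e hd hc h₁ h₂ =>
        refine ⟨e, fun _ => ⟨⟨hd, hc⟩, fun t ht _ => ?_⟩⟩
        have := hle t ht
        exact ⟨t - 1, by omega, h₁.mono (by omega), h₂.mono (by omega)⟩
    · obtain ⟨e, he⟩ := exists_uncolored_edge hf
      exact ⟨e, fun _ => ⟨he, fun t ht hW => absurd ⟨hW, t, ht⟩ hw⟩⟩
  choose b hb using key
  have hfin : ∀ p t, (playGame b p B t).colored.Finite := by
    intro p t
    induction t with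
    | zero => exact hB
    | succ t ih =>
      refine (ih.insert (b (playGame b p B t))).subset ?_
      simp only [playGame]
      split <;> intro e he <;> simp only [Board.colored, Set.mem_union, Set.mem_insert_iff] at he ⊢
        <;> tauto
  refine ⟨b, fun p t => (hb _ (hfin p t)).1, fun p => ?_⟩
  have hplay : ∀ u s, ForcedWin W u (playGame b p B s) →
      ∃ s', s' ≤ s + u ∧ W (playGame b p B s') := by
    intro u
    induction u with
    | zero =>
      intro s hs
      by_cases hW : W (playGame b p B s)
      · exact ⟨s, by omega, hW⟩
      obtain ⟨v, hv, -⟩ := (hb _ (hfin p s)).2 _ hs hW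
      omega
    | succ u ih =>
      intro s hs
      by_cases hW : W (playGame b p B s)
      · exact ⟨s, by omega, hW⟩
      obtain ⟨v, hv, h₁, h₂⟩ := (hb _ (hfin p s)).2 _ hs hW
      obtain rfl : u = v := by omega
      obtain ⟨s', hs', hW'⟩ := ih (s + 1) (by
        simp only [playGame]
        split
        · exact h₁
        · exact h₂)
      exact ⟨s', by omega, hW'⟩
  simpa using hplay t 0 h

/-- Builder wins by drawing a list of edges, if a blue answer to any of them loses for Painter
and so do red answers to all of them. -/
theorem ForcedWin.of_list {W : Board → Prop} (hW : ∀ B B' : Board, B ≤ B' → W B → W B')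
    (l : List (Sym2 ℕ)) (B : Board) (hd : ∀ e ∈ l, ¬ e.IsDiag)
    (hblue : ∀ e ∈ l, e ∈ B.1 ∨ W (B.1, insert e B.2)) (hred : W (B.1 ∪ {e | e ∈ l}, B.2)) :
    ForcedWin W l.length B := by
  induction l generalizing B with
  | nil => exact .done (by simpa using hred)
  | cons e l ih =>
    simp only [List.forall_mem_cons] at hd hblue
    have hred' : ForcedWin W l.length (insert e B.1, B.2) := by
      refine ih _ hd.2 (fun e' he' => ?_) (hW (B.1 ∪ {x | x ∈ e :: l}, B.2) _ ⟨?_, le_rfl⟩ hred)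
      · rcases hblue.2 e' he' with h | h
        · exact .inl (Set.mem_insert_of_mem _ h)
        · exact .inr (hW (B.1, insert e' B.2) _ ⟨Set.subset_insert _ _, le_rfl⟩ h)
      · intro x hx
        simp only [Set.mem_union, Set.mem_ofPred_eq, List.mem_cons, Set.mem_insert_iff] at hx ⊢
        tauto
    rcases hblue.1 with h | h
    · rw [Set.insert_eq_of_mem h] at hred'
      exact hred'.mono (Nat.le_succ _)
    · exact .branch e hd.1 hred' (.done h)

theorem HasCopy.mono {α β : Type} {H : SimpleGraph α} {G G' : SimpleGraph β} (hG : G ≤ G')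
    (h : HasCopy H G) : HasCopy H G' :=
  let ⟨f, hf⟩ := h
  ⟨f, fun x y hxy => hG (hf x y hxy)⟩

theorem hasCopy_cycleGraph {l : ℕ} (hl : 2 ≤ l) {E : Set (Sym2 ℕ)} (f : ℕ → ℕ)
    (hf : ∀ p < l, ∀ q < l, f p = f q → p = q)
    (hE : ∀ p < l, s(f p, f ((p + 1) % l)) ∈ E) :
    HasCopy (cycleGraph l) (fromEdgeSet E) := by
  obtain ⟨l, rfl⟩ : ∃ j, l = j + 2 := ⟨l - 2, by omega⟩
  refine ⟨⟨fun i => f i, fun i j hij => Fin.ext (hf _ i.2 _ j.2 hij)⟩, fun x y hxy => ?_⟩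
  have hne : f x ≠ f y := fun h => hxy.ne (Fin.ext (hf _ x.2 _ y.2 h))
  rw [fromEdgeSet_adj]
  refine ⟨?_, hne⟩
  have hval : ∀ z : Fin (l + 2), ((z + 1 : Fin (l + 2)) : ℕ) = (z + 1) % (l + 2) := by
    intro z
    simp [Fin.val_add]
  rw [cycleGraph_adj] at hxy
  rcases hxy with h | h
  · have := hE y y.2
    rw [← hval, ← sub_eq_iff_eq_add'.1 h, Sym2.eq_swap] at this
    exact this
  · have := hE x x.2
    rw [← hval, ← sub_eq_iff_eq_add'.1 h] at this
    exact this

/-- Cutting a cycle of length `N` short along the chords `ab` and `cd`, where `d = N` stands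
for the vertex `0`. -/
theorem hasCopy_cycleGraph_of_chords {N a b c d l : ℕ} {E : Set (Sym2 ℕ)}
    (hN : ∀ i < N, s(i, (i + 1) % N) ∈ E) (hab : a < b) (hbc : b ≤ c) (hcd : c < d)
    (hd : d ≤ N) (h₁ : s(a, b) ∈ E) (h₂ : s(c, d % N) ∈ E)
    (hl : l + b + d = a + c + N + 2) :
    HasCopy (cycleGraph l) (fromEdgeSet E) := by
  refine hasCopy_cycleGraph (by omega)
    (fun p => if p ≤ a then p else if p + b ≤ a + c + 1 then p + b - a - 1
      else p + b + d - a - c - 2) (fun p hp q hq => ?_) (fun p hp => ?_)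
  · split_ifs <;> omega
  · have hstep : ∀ i j, i < N → (j = i + 1 ∧ j < N ∨ i + 1 = N ∧ j = 0) → s(i, j) ∈ E := by
      intro i j hi hj
      have := hN i hi
      rcases hj with ⟨rfl, hj⟩ | ⟨hj, rfl⟩
      · rwa [Nat.mod_eq_of_lt hj] at this
      · rwa [hj, Nat.mod_self] at this
    have hmod : (p + 1 < l ∧ (p + 1) % l = p + 1) ∨ (p + 1 = l ∧ (p + 1) % l = 0) := by
      rcases Nat.lt_or_ge (p + 1) l with h | h
      · exact .inl ⟨h, Nat.mod_eq_of_lt h⟩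
      · have : p + 1 = l := by omega
        exact .inr ⟨this, by rw [this, Nat.mod_self]⟩
    have hdmod : (d < N ∧ d % N = d) ∨ (d = N ∧ d % N = 0) := by
      rcases Nat.lt_or_ge d N with h | h
      · exact .inl ⟨h, Nat.mod_eq_of_lt h⟩
      · have : d = N := by omega
        exact .inr ⟨this, by rw [this, Nat.mod_self]⟩
    have hcases : ∀ i j, (i = a ∧ j = b) ∨ (i = c ∧ j = d % N) ∨
        (i < N ∧ (j = i + 1 ∧ j < N ∨ i + 1 = N ∧ j = 0)) → s(i, j) ∈ E := by
      rintro i j (⟨rfl, rfl⟩ | ⟨rfl, rfl⟩ | ⟨hi, hj⟩)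
      · exact h₁
      · exact h₂
      · exact hstep i j hi hj
    apply hcases
    generalize (p + 1) % l = p' at hmod
    generalize d % N = d' at hdmod
    split_ifs <;> omega

/-- The part of a cycle cut off by a single chord. -/
theorem hasCopy_cycleGraph_of_arc {N a b l : ℕ} {E : Set (Sym2 ℕ)}
    (hN : ∀ i < N, s(i, (i + 1) % N) ∈ E) (hab : a < b) (hb : b < N)
    (h : s(a, b) ∈ E) (hl : l + a = b + 1) :
    HasCopy (cycleGraph l) (fromEdgeSet E) := by
  refine hasCopy_cycleGraph (by omega) (fun p => a + p) (fun p _ q _ hpq => by simpa using hpq)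
    (fun p hp => ?_)
  rcases Nat.lt_or_ge (p + 1) l with h' | h'
  · have := hN (a + p) (by omega)
    rw [Nat.mod_eq_of_lt h']
    rwa [Nat.mod_eq_of_lt (by omega), add_assoc] at this
  · have hp' : p + 1 = l := by omega
    simp only [hp', Nat.mod_self]
    rw [show a + p = b by omega, Nat.add_zero, Sym2.eq_swap]
    exact h

/-- The winning condition: a red `C_k` or a blue cycle of length `q`, `q + 1` or `q + 2`. -/
def WinNear (k q : ℕ) (B : Board) : Prop :=
  RedCopy (cycleGraph k) B ∨
    ∃ l : ℕ, (l = q ∨ l = q + 1 ∨ l = q + 2) ∧ BlueCopy (cycleGraph l) B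

theorem WinNear.mono {k q : ℕ} (B B' : Board) (hB : B ≤ B') (h : WinNear k q B) :
    WinNear k q B' := by
  rcases h with h | ⟨l, hl, h⟩
  · exact .inl (HasCopy.mono (fromEdgeSet_mono hB.1) h)
  · exact .inr ⟨l, hl, HasCopy.mono (fromEdgeSet_mono hB.2) h⟩

/-- Builder draws the first `s` edges of a prospective red cycle whose other edges are red. -/
theorem ForcedWin.of_cycle {k q s : ℕ} (hk : 2 ≤ k) (hs : s ≤ k) {B : Board} (f : ℕ → ℕ)
    (hf : ∀ i < k, ∀ j < k, f i = f j → i = j)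
    (hblue : ∀ p < s, s(f p, f ((p + 1) % k)) ∈ B.1 ∨
      WinNear k q (B.1, insert s(f p, f ((p + 1) % k)) B.2))
    (hred : ∀ p, s ≤ p → p < k → s(f p, f ((p + 1) % k)) ∈ B.1) :
    ForcedWin (WinNear k q) s B := by
  have := ForcedWin.of_list (W := WinNear k q) WinNear.mono
    ((List.range s).map fun p => s(f p, f ((p + 1) % k))) B ?_ ?_ (.inl ?_)
  · simpa using this
  · simp only [List.mem_map, List.mem_range, forall_exists_index, and_imp]
    rintro _ p hp rfl
    rw [Sym2.mk_isDiag_iff]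
    intro h
    have := hf _ (by omega) _ (Nat.mod_lt _ (by omega)) h
    rcases Nat.lt_or_ge (p + 1) k with h' | h'
    · rw [Nat.mod_eq_of_lt h'] at this
      omega
    · rw [show p + 1 = k by omega, Nat.mod_self] at this
      omega
  · simp only [List.mem_map, List.mem_range, forall_exists_index, and_imp]
    rintro _ p hp rfl
    exact hblue p hp
  · refine hasCopy_cycleGraph hk f hf fun p hp => ?_
    rcases Nat.lt_or_ge p s with h | h
    · exact .inr (List.mem_map.2 ⟨p, List.mem_range.2 h, rfl⟩)
    · exact .inl (hred p h hp)

/-- The cyclic order `u 0, w 1, u 2, …, w 2, u 1, w 0` on two rows of length `t`, followed by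
the vertex `v`. -/
def zigzag (u w : ℕ → ℕ) (v t p : ℕ) : ℕ :=
  if p < 2 * t then
    if p % 2 = 0 then u (min p (2 * t - 1 - p)) else w (min p (2 * t - 1 - p))
  else v

theorem zigzag_injective {u w : ℕ → ℕ} {v t : ℕ}
    (hu : ∀ i < t, ∀ j < t, u i = u j → i = j) (hw : ∀ i < t, ∀ j < t, w i = w j → i = j)
    (huw : ∀ i < t, ∀ j < t, u i ≠ w j) (huv : ∀ i < t, u i ≠ v) (hwv : ∀ i < t, w i ≠ v) :
    ∀ p < 2 * t + 1, ∀ q < 2 * t + 1, zigzag u w v t p = zigzag u w v t q → p = q := by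
  intro p hp q hq h
  unfold zigzag at h
  split_ifs at h
  · have := hu _ (by omega) _ (by omega) h
    omega
  · exact absurd h (huw _ (by omega) _ (by omega))
  · exact absurd h (huv _ (by omega))
  · exact absurd h.symm (huw _ (by omega) _ (by omega))
  · have := hw _ (by omega) _ (by omega) h
    omega
  · exact absurd h (hwv _ (by omega))
  · exact absurd h.symm (huv _ (by omega))
  · exact absurd h.symm (hwv _ (by omega))
  · omega

theorem zigzag_step {u w : ℕ → ℕ} {v t : ℕ} {P : Sym2 ℕ → Prop}
    (hP : ∀ i < t, ∀ j < t, i ≤ j + 1 → j ≤ i + 1 → P s(u i, w j)) {p : ℕ}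
    (hp : p + 1 < 2 * t) : P s(zigzag u w v t p, zigzag u w v t (p + 1)) := by
  unfold zigzag
  rw [if_pos hp, if_pos (by omega : p < 2 * t)]
  split_ifs
  · omega
  · exact hP _ (by omega) _ (by omega) (by omega) (by omega)
  · rw [Sym2.eq_swap]
    exact hP _ (by omega) _ (by omega) (by omega) (by omega)
  · omega

/-- Builder wins by an even red cycle if all the edges between nearby positions of two rows are
forced to be red. -/
theorem ForcedWin.of_rows_even {q t : ℕ} (ht : 1 ≤ t) {B : Board} (u w : ℕ → ℕ)
    (hu : ∀ i < t, ∀ j < t, u i = u j → i = j) (hw : ∀ i < t, ∀ j < t, w i = w j → i = j)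
    (huw : ∀ i < t, ∀ j < t, u i ≠ w j)
    (hblue : ∀ i < t, ∀ j < t, i ≤ j + 1 → j ≤ i + 1 →
      WinNear (2 * t) q (B.1, insert s(u i, w j) B.2)) :
    ForcedWin (WinNear (2 * t) q) (2 * t) B := by
  obtain ⟨v, hv⟩ : ∃ v, v ∉ (Finset.range t).image u ∪ (Finset.range t).image w :=
    Infinite.exists_notMem_finset _
  simp only [Finset.mem_union, Finset.mem_image, Finset.mem_range, not_or, not_exists,
    not_and] at hv
  have hinj := zigzag_injective hu hw huw hv.1 hv.2
  refine .of_cycle (by omega) le_rfl (zigzag u w v t)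
    (fun i hi j hj => hinj i (by omega) j (by omega)) (fun p hp => .inr ?_)
    (fun p h₁ h₂ => by omega)
  rcases Nat.lt_or_ge (p + 1) (2 * t) with h | h
  · rw [Nat.mod_eq_of_lt h]
    exact zigzag_step (P := fun e => WinNear (2 * t) q (B.1, insert e B.2)) hblue h
  · obtain rfl : p = 2 * t - 1 := by omega
    have := hblue 0 (by omega) 0 (by omega) (by omega) (by omega)
    rw [Sym2.eq_swap] at this
    rw [show 2 * t - 1 + 1 = 2 * t by omega, Nat.mod_self]
    unfold zigzag
    rwa [if_pos (by omega), if_neg (by omega), if_pos (by omega), if_pos (by omega),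
      show min (2 * t - 1) (2 * t - 1 - (2 * t - 1)) = 0 by omega,
      show min 0 (2 * t - 1 - 0) = 0 by omega]

/-- Builder wins by an odd red cycle through two rows and a vertex `v` joined to the start of
both rows. -/
theorem ForcedWin.of_rows_odd {q t s : ℕ} (ht : 1 ≤ t) {B : Board} (u w : ℕ → ℕ) (v : ℕ)
    (hu : ∀ i < t, ∀ j < t, u i = u j → i = j) (hw : ∀ i < t, ∀ j < t, w i = w j → i = j)
    (huw : ∀ i < t, ∀ j < t, u i ≠ w j) (huv : ∀ i < t, u i ≠ v) (hwv : ∀ i < t, w i ≠ v)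
    (hblue : ∀ i < t, ∀ j < t, i ≤ j + 1 → j ≤ i + 1 →
      WinNear (2 * t + 1) q (B.1, insert s(u i, w j) B.2))
    (hwv' : s(w 0, v) ∈ B.1 ∨ WinNear (2 * t + 1) q (B.1, insert s(w 0, v) B.2))
    (hvu : s = 2 * t ∧ s(v, u 0) ∈ B.1 ∨
      s = 2 * t + 1 ∧ WinNear (2 * t + 1) q (B.1, insert s(v, u 0) B.2)) :
    ForcedWin (WinNear (2 * t + 1) q) s B := by
  have hlast : s(zigzag u w v t (2 * t), zigzag u w v t ((2 * t + 1) % (2 * t + 1))) =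
      s(v, u 0) := by
    rw [Nat.mod_self]
    unfold zigzag
    rw [if_neg (by omega), if_pos (by omega), if_pos (by omega),
      show min 0 (2 * t - 1 - 0) = 0 by omega]
  refine .of_cycle (by omega) (by omega) (zigzag u w v t)
    (zigzag_injective hu hw huw huv hwv) (fun p hp => ?_) (fun p h₁ h₂ => ?_)
  · rcases Nat.lt_or_ge (p + 1) (2 * t) with h | h
    · rw [Nat.mod_eq_of_lt (by omega)]
      exact .inr (zigzag_step (P := fun e => WinNear (2 * t + 1) q (B.1, insert e B.2)) hblue h)
    rcases Nat.lt_or_ge p (2 * t) with h' | h'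
    · obtain rfl : p = 2 * t - 1 := by omega
      rw [show 2 * t - 1 + 1 = 2 * t by omega, Nat.mod_eq_of_lt (by omega)]
      unfold zigzag
      rwa [if_pos (by omega), if_neg (by omega), if_neg (by omega),
        show min (2 * t - 1) (2 * t - 1 - (2 * t - 1)) = 0 by omega]
    · rcases hvu with ⟨hs, _⟩ | ⟨hs, hvu⟩
      · omega
      · obtain rfl : p = 2 * t := by omega
        rw [hlast]
        exact .inr hvu
  · rcases hvu with ⟨hs, hvu⟩ | ⟨hs, _⟩
    · obtain rfl : p = 2 * t := by omega
      rw [hlast]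
      exact hvu
    · omega

section BlueCycle

variable {k q N : ℕ} {R E : Set (Sym2 ℕ)}

theorem winNear_of_chords (hN : ∀ i < N, s(i, (i + 1) % N) ∈ E) {a b c d : ℕ}
    (hab : a < b) (hbc : b ≤ c) (hcd : c < d) (hd : d ≤ N)
    (h₁ : s(a, b) ∈ E) (h₂ : s(c, d % N) ∈ E)
    (hl : q + b + d ≤ a + c + N + 2) (hl' : a + c + N ≤ q + b + d) :
    WinNear k q (R, E) :=
  .inr ⟨a + c + N + 2 - (b + d), by omega,
    hasCopy_cycleGraph_of_chords hN hab hbc hcd hd h₁ h₂ (by omega)⟩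

theorem winNear_of_long_chord (hN : ∀ i < N, s(i, (i + 1) % N) ∈ E) {a b : ℕ}
    (hab : a < b) (hb : b < N) (h : s(a, b) ∈ E)
    (hl : q + b ≤ a + N + 1) (hl' : a + N ≤ q + b + 1) :
    WinNear k q (R, E) :=
  winNear_of_chords hN hab le_rfl (Nat.lt_succ_self b) (by omega) h (hN b hb)
    (by omega) (by omega)

theorem winNear_of_arc (hN : ∀ i < N, s(i, (i + 1) % N) ∈ E) {a b : ℕ}
    (hab : a < b) (hb : b < N) (h : s(a, b) ∈ E)
    (hl : q + a ≤ b + 1) (hl' : b ≤ q + a + 1) :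
    WinNear k q (R, E) :=
  .inr ⟨b + 1 - a, by omega, hasCopy_cycleGraph_of_arc hN hab hb h (by omega)⟩

end BlueCycle

theorem forcedWin_even {t m q : ℕ} {B : Board} (ht : 1 ≤ t) (htm : t ≤ m) (hq : m ≤ q)
    (hN : ∀ i < q + 2 * m, s(i, (i + 1) % (q + 2 * m)) ∈ B.2) :
    ForcedWin (WinNear (2 * t) q) (2 * t) B := by
  refine .of_rows_even ht (fun i => i) (fun j => 2 * m + j) (by grind) (by grind) (by grind)
    (fun i hi j hj h₁ h₂ => ?_)
  exact winNear_of_long_chord (fun i hi => .inr (hN i hi)) (by omega) (by omega) (.inl rfl)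
    (by omega) (by omega)

theorem forcedWin_odd {t m q : ℕ} {B : Board} (ht : 1 ≤ t) (htm : t ≤ m) (hq : m ≤ q)
    (hN : ∀ i < q + 2 * m, s(i, (i + 1) % (q + 2 * m)) ∈ B.2) :
    ForcedWin (WinNear (2 * t + 1) q) (2 * t + 2) B := by
  refine .branch s(0, m) (by simp; omega) ?_ ?_
  · refine .branch s(m, 2 * m) (by simp; omega) ?_ ?_
    · refine .of_rows_odd ht (fun i => i) (fun j => 2 * m + j) m (by grind) (by grind) (by grind)
        (by grind) (by grind) (fun i hi j hj h₁ h₂ => ?_) (.inl (.inl Sym2.eq_swap))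
        (.inl ⟨rfl, .inr (.inl Sym2.eq_swap)⟩)
      exact winNear_of_long_chord (fun i hi => .inr (hN i hi)) (by omega) (by omega) (.inl rfl)
        (by omega) (by omega)
    · rcases hq.eq_or_lt with rfl | hq
      · exact .done (winNear_of_arc (fun i hi => .inr (hN i hi)) (by omega) (by omega) (.inl rfl)
          (by omega) (by omega))
      refine .of_rows_odd ht (fun i => m + i) (fun j => q + m + j) 0 (by grind) (by grind)
        (by grind) (by grind) (by grind) (fun i hi j hj h₁ h₂ => ?_) (.inr ?_)
        (.inl ⟨rfl, .inl rfl⟩)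
      · exact winNear_of_arc (fun i hi => .inr (.inr (hN i hi))) (by omega) (by omega) (.inl rfl)
          (by omega) (by omega)
      · exact winNear_of_chords (a := m) (b := 2 * m) (c := q + m) (d := q + 2 * m)
          (fun i hi => .inr (.inr (hN i hi))) (by omega) (by omega) (by omega) le_rfl
          (.inr (.inl rfl)) (.inl (by rw [Nat.mod_self]; rfl)) (by omega) (by omega)
  · rcases hq.eq_or_lt with rfl | hq
    · exact .done (winNear_of_arc (fun i hi => .inr (hN i hi)) (by omega) (by omega) (.inl rfl)
        (by omega) (by omega))
    refine .of_rows_odd ht (fun i => m - i) (fun j => 3 * m - j) (2 * m) (by grind) (by grind)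
      (by grind) (by grind) (by grind) (fun i hi j hj h₁ h₂ => ?_) (.inr ?_)
      (.inr ⟨rfl, ?_⟩)
    · exact winNear_of_long_chord (fun i hi => .inr (.inr (hN i hi))) (by omega) (by omega)
        (.inl rfl) (by omega) (by omega)
    · exact winNear_of_chords (a := 0) (b := m) (c := 2 * m) (d := 3 * m)
        (fun i hi => .inr (.inr (hN i hi))) (by omega) (by omega) (by omega) (by omega)
        (.inr (.inl rfl)) (.inl (by rw [Nat.mod_eq_of_lt (by omega)]; exact Sym2.eq_swap))
        (by omega) (by omega)
    · exact winNear_of_chords (a := 0) (b := m) (c := m) (d := 2 * m)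
        (fun i hi => .inr (.inr (hN i hi))) (by omega) (by omega) (by omega) (by omega)
        (.inr (.inl rfl)) (.inl (by rw [Nat.mod_eq_of_lt (by omega)]; exact Sym2.eq_swap))
        (by omega) (by omega)

theorem blueCycleBoard_colored_finite (N : ℕ) : (blueCycleBoard N).colored.Finite := by
  refine ((Set.finite_Iio N).image fun i => s(i, (i + 1) % N)).subset ?_
  rintro e (he | ⟨i, hi, rfl⟩)
  · exact absurd he (Set.notMem_empty e)
  · exact ⟨i, hi, rfl⟩

theorem builderWinsIn_winNear {k m q : ℕ} (hk : 3 ≤ k) (hkm : k ≤ 2 * m + 1) (hq : m ≤ q) :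
    BuilderWinsIn (blueCycleBoard (q + 2 * m)) (WinNear k q) (k + 1) := by
  refine ForcedWin.builderWinsIn ?_ (blueCycleBoard_colored_finite _)
  have hN : ∀ i < q + 2 * m,
      s(i, (i + 1) % (q + 2 * m)) ∈ (blueCycleBoard (q + 2 * m)).2 :=
    fun i hi => ⟨i, hi, rfl⟩
  obtain ⟨t, rfl | rfl⟩ := Nat.even_or_odd' k
  · exact (forcedWin_even (by omega) (by omega) hq hN).mono (Nat.le_succ _)
  · exact forcedWin_odd (by omega) (by omega) hq hN

/-- Efficient shortening of very long blue cycles: for `k ≥ 3`, `k ≤ h ≤ 2n`, a blue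
cycle of length `n + h`, and `r = 0` for even `h`, `r = 1` for odd `h`, we have
`r̃_H(C_k, {C_{n+r}, C_{n+r+1}, C_{n+r+2}}) ≤ k + 1`. -/
theorem shorten_very_long_blue_cycle (k n h : ℕ) (hk : 3 ≤ k) (h1 : k ≤ h)
    (h2 : h ≤ 2 * n) :
    BuilderWinsIn (blueCycleBoard (n + h))
      (fun B => RedCopy (SimpleGraph.cycleGraph k) B ∨
        ∃ ℓ : ℕ, (ℓ = n + (if Even h then 0 else 1) ∨
                  ℓ = n + (if Even h then 0 else 1) + 1 ∨
                  ℓ = n + (if Even h then 0 else 1) + 2) ∧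
          BlueCopy (SimpleGraph.cycleGraph ℓ) B)
      (k + 1) := by
  have hq : n + h = n + (if Even h then 0 else 1) + 2 * (h / 2) := by
    split_ifs with he
    · have := Nat.even_iff.1 he
      omega
    · have := Nat.not_even_iff.1 he
      omega
  rw [hq]
  exact builderWinsIn_winNear hk (by omega) (by omega)
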